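/- Let k and t be positive integers with k ≥ 4 and let ε > 0. There exist δ > 0 and an integer n₀ such that for all integers n ≥ n₀: if F ⊆ binom([n],k) contains no copy of the k-uniform linear path P^{(k)}_{2t+2} (in particular, if F contains no copy of P^{(k)}_{2t+1}) and |F| ≥ (t−δ)·C(n,k−1), then there exists a set S ⊆ [n] with |S| = t such that the number of members of F disjoint from S is at most ε·C(n,k−1). -/

import Mathlib

open Finset

/-- The family `F` of k-sets contains a k-uniform linear path of length ℓ:
distinct members `P 0, …, P (ℓ-1)` with consecutive members meeting in exactly one
vertex and non-consecutive members disjoint. -/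
def ContainsLinearPath (k ℓ : ℕ) {n : ℕ} (F : Finset (Finset (Fin n))) : Prop :=
  ∃ P : Fin ℓ → Finset (Fin n), Function.Injective P ∧
    (∀ i, P i ∈ F) ∧ (∀ i, (P i).card = k) ∧
    (∀ i j : Fin ℓ, (i : ℕ) + 1 = (j : ℕ) → (P i ∩ P j).card = 1) ∧
    (∀ i j : Fin ℓ, (i : ℕ) + 1 < (j : ℕ) → P i ∩ P j = ∅)

/-!
Call a set a kernel of `F` if it extends to members of `F` whose new vertices avoid any prescribed
bounded set, and put an arc `x → y` when `{x}` and `{x, y}` are kernels. An antidirected path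
`w 0 → w 1 ← w 2 → ⋯ ← w (2t)` would extend greedily, with one more member at each end, to a linear
path of length `2t + 2`, so it does not exist. Hence the digraph has linearly many arcs, there are
boundedly many hubs (vertices of linear out-degree), and all but boundedly many vertices are
dominated by at most `t` hubs.

Members without a centre (a vertex with arcs to all others) are negligible. By Füredi's theorem a
positive proportion of them would form a homogeneous subfamily; if that has more than `C(n, k-2)`
members, its intersection patterns are closed under intersection and cover every `(k-2)`-set, so for
`k ≥ 4` either two vertices of each member are kernels, which yields arbitrarily long linear paths,
or some vertex is a centre. Members whose centre is not a hub are negligible as well.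

So almost every member consists of a `(k-1)`-set and a hub dominating all of it. Having nearly
`t * C(n, k-1)` members forces almost all `(k-1)`-sets to have `t` common dominators, which makes a
single `t`-set the dominator set of almost every vertex.
-/

/-! ### Linear paths and kernels -/

section Kernels

variable {V : Type*} [DecidableEq V] {F G : Finset (Finset V)} {k m L : ℕ}

/-- `P 0, …, P (L - 1)` is a linear path in `F`. The path is indexed by `ℕ`, with arbitrary values
from `L` on, so that it can be extended without casts. -/
structure IsLinearPath (F : Finset (Finset V)) (L : ℕ) (P : ℕ → Finset V) : Prop where
  mem : ∀ i < L, P i ∈ F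
  card_inter : ∀ i, i + 1 < L → #(P i ∩ P (i + 1)) = 1
  disjoint : ∀ i j, i + 1 < j → j < L → Disjoint (P i) (P j)

/-- The sequence `a, f 0, f 1, …`, used to grow paths backwards. -/
def prepend {α : Type*} (a : α) (f : ℕ → α) : ℕ → α
  | 0 => a
  | i + 1 => f i

/-- `A` is the kernel of members of `F` that avoid any prescribed `m` vertices outside `A`; this is
the robust form of being the kernel of a large sunflower in `F`. -/
def IsKernel (m : ℕ) (F : Finset (Finset V)) (A : Finset V) : Prop :=
  ∀ X : Finset V, #X ≤ m → ∃ E ∈ F, A ⊆ E ∧ Disjoint (E \ A) X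

theorem IsKernel.mono {A : Finset V} (hGF : G ⊆ F) (hA : IsKernel m G A) : IsKernel m F A := by
  intro X hX
  obtain ⟨E, hE, hAE⟩ := hA X hX
  exact ⟨E, hGF hE, hAE⟩

theorem IsLinearPath.mono {P : ℕ → Finset V} (hGF : G ⊆ F) (hP : IsLinearPath G L P) :
    IsLinearPath F L P :=
  ⟨fun i hi => hGF (hP.mem i hi), hP.card_inter, hP.disjoint⟩

theorem IsLinearPath.prepend {P : ℕ → Finset V} {e : Finset V} (hP : IsLinearPath F L P)
    (he : e ∈ F) (hzero : #(e ∩ P 0) = 1) (hpos : ∀ i < L, 0 < i → Disjoint e (P i)) :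
    IsLinearPath F (L + 1) (prepend e P) where
  mem
    | 0, _ => he
    | i + 1, hi => hP.mem i (by lia)
  card_inter
    | 0, _ => hzero
    | i + 1, hi => hP.card_inter i (by lia)
  disjoint
    | 0, j + 1, hij, hj => hpos j (by lia) (by lia)
    | i + 1, j + 1, hij, hj => hP.disjoint i j (by lia) (by lia)

theorem IsLinearPath.ne {P : ℕ → Finset V} (hk : 2 ≤ k) (hF : (F : Set (Finset V)).Sized k)
    (hP : IsLinearPath F L P) {i j : ℕ} (hij : i < j) (hj : j < L) : P i ≠ P j := by
  intro h
  have hcard : #(P i ∩ P j) = k := by rw [h, inter_self, hF (hP.mem j hj)]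
  obtain rfl | hij := Nat.succ_le_of_lt hij |>.eq_or_lt
  · have := hP.card_inter i hj
    lia
  · have := disjoint_iff_inter_eq_empty.1 (hP.disjoint i j hij hj)
    simp only [this, card_empty] at hcard
    lia

theorem IsLinearPath.containsLinearPath {n : ℕ} {F : Finset (Finset (Fin n))}
    {P : ℕ → Finset (Fin n)} (hk : 2 ≤ k) (hF : (F : Set (Finset (Fin n))).Sized k)
    (hP : IsLinearPath F L P) : ContainsLinearPath k L F := by
  refine ⟨fun i => P i, fun i j hij => ?_, fun i => hP.mem i i.2, fun i => hF (hP.mem i i.2),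
    fun i j hij => ?_, fun i j hij => disjoint_iff_inter_eq_empty.1 (hP.disjoint i j hij j.2)⟩
  · obtain h | h | h := lt_trichotomy (i : ℕ) j
    · exact absurd hij (hP.ne hk hF h j.2)
    · exact Fin.ext h
    · exact absurd hij.symm (hP.ne hk hF h i.2)
  · simpa only [hij] using hP.card_inter i (by lia)

theorem exists_members_inter_eq_inter_kernels {ι : Type*} {K : ι → Finset V} {U : Finset V}
    (hF : (F : Set (Finset V)).Sized k) (s : Finset ι) (hU : ∀ i ∈ s, K i ⊆ U)
    (hK : ∀ i ∈ s, IsKernel m F (K i)) (hm : #U + #s * k ≤ m) :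
    ∃ E : ι → Finset V, (∀ i ∈ s, E i ∈ F ∧ E i ∩ U = K i) ∧
      (s : Set ι).Pairwise fun i j => E i ∩ E j = K i ∩ K j := by
  classical
  induction s using Finset.induction_on with
  | empty => exact ⟨K, by simp, by simp⟩
  | insert a s ha ih =>
    rw [card_insert_of_notMem ha] at hm
    simp only [forall_mem_insert] at hU hK
    obtain ⟨E, hE, hEE⟩ := ih hU.2 hK.2 (by lia)
    have hcard : #(U ∪ s.biUnion E) ≤ m := calc
      #(U ∪ s.biUnion E) ≤ #U + #s * k := (card_union_le _ _).trans <| Nat.add_le_add_left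
        (card_biUnion_le_card_mul _ _ _ fun i hi => (hF (hE i hi).1).le) _
      _ ≤ m := by lia
    obtain ⟨e, he, hae, hdisj⟩ := hK.1 _ hcard
    rw [disjoint_union_right, disjoint_biUnion_right] at hdisj
    have hupd : ∀ i ∈ s, Function.update E a e i = E i := fun i hi =>
      Function.update_of_ne (ne_of_mem_of_not_mem hi ha) _ _
    refine ⟨Function.update E a e, ?_, ?_⟩
    · simp only [forall_mem_insert, Function.update_self]
      refine ⟨⟨he, ?_⟩, fun i hi => by rw [hupd i hi]; exact hE i hi⟩
      grind [Finset.disjoint_left]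
    · have hnew : ∀ j ∈ s, e ∩ E j = K a ∩ K j := fun j hj => by
        have := hdisj.2 j hj
        have := (hE j hj).2
        grind [Finset.disjoint_left]
      rw [coe_insert, Set.pairwise_insert_of_notMem (mem_coe.not.2 ha)]
      refine ⟨fun i hi j hj hij => ?_, fun j hj => ?_⟩
      · simpa only [hupd i hi, hupd j hj] using hEE hi hj hij
      · rw [hupd j hj, Function.update_self, inter_comm (E j), inter_comm (K j)]
        exact ⟨hnew j hj, hnew j hj⟩

theorem exists_isLinearPath_of_kernel_walk {w : ℕ → V} (hF : (F : Set (Finset V)).Sized k)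
    (hw : Set.InjOn w (Set.Iic L)) (hfirst : IsKernel m F {w 0})
    (hpair : ∀ i < L, IsKernel m F {w i, w (i + 1)}) (hlast : IsKernel m F {w L})
    (hm : L + 1 + (L + 2) * k ≤ m) : ∃ P, IsLinearPath F (L + 2) P := by
  -- The end kernels `{w 0}` and `{w L}` are the intervals cut off at the ends of the walk.
  set K : ℕ → Finset V := fun i => (Icc (i - 1) (min i L)).image w with hK
  have hinter (i j : ℕ) : K i ∩ K j = (Icc (i - 1) (min i L) ∩ Icc (j - 1) (min j L)).image w :=
    (image_inter_of_injOn _ _ <| hw.mono fun x hx => by grind).symm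
  have hkernel : ∀ i ∈ range (L + 2), IsKernel m F (K i) := by
    rintro (_ | i) hi
    · simpa [hK] using hfirst
    · obtain h | rfl := Nat.lt_succ_iff_lt_or_eq.1 (by simpa using hi : i < L + 1)
      · have : Icc i (min (i + 1) L) = {i, i + 1} := by grind
        simpa [hK, this, image_insert] using hpair i h
      · simpa [hK] using hlast
  obtain ⟨P, hP, hPP⟩ := exists_members_inter_eq_inter_kernels (U := (range (L + 1)).image w) hF
    (range (L + 2)) (fun i _ => image_subset_image fun x hx => by grind) hkernel
    (by simpa using (Nat.add_le_add_right card_image_le _).trans (by simpa using hm))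
  refine ⟨P, fun i hi => (hP i (by simpa using hi)).1, fun i hi => ?_, fun i j hij hj => ?_⟩
  · have : Icc (i - 1) (min i L) ∩ Icc i (min (i + 1) L) = {i} := by grind
    rw [hPP (by grind) (by grind) (by lia), hinter, Nat.add_sub_cancel, this]
    simp
  · have : Icc (i - 1) (min i L) ∩ Icc (j - 1) (min j L) = ∅ := by grind
    rw [disjoint_iff_inter_eq_empty, hPP (by grind) (by grind) (by lia), hinter, this,
      image_empty]

theorem IsLinearPath.forall_notMem_or_forall_notMem {P : ℕ → Finset V} {x y : V}
    (hP : IsLinearPath F L P) (hx : x ∈ P 0) (hy : y ∈ P 0) (hxy : x ≠ y) :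
    (∀ i < L, 0 < i → x ∉ P i) ∨ ∀ i < L, 0 < i → y ∉ P i := by
  by_contra! h
  obtain ⟨⟨i, hiL, hi, hxi⟩, j, hjL, hj, hyj⟩ := h
  have eq_one {z l} (hz : z ∈ P 0) (hlL : l < L) (hl : 0 < l) (hzl : z ∈ P l) : l = 1 := by
    by_contra hne
    exact disjoint_left.1 (hP.disjoint 0 l (by lia) hlL) hz hzl
  obtain rfl := eq_one hx hiL hi hxi
  obtain rfl := eq_one hy hjL hj hyj
  obtain ⟨z, hz⟩ := card_eq_one.1 (hP.card_inter 0 hiL)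
  have hxz : x ∈ P 0 ∩ P 1 := mem_inter.2 ⟨hx, hxi⟩
  have hyz : y ∈ P 0 ∩ P 1 := mem_inter.2 ⟨hy, hyj⟩
  rw [hz, mem_singleton] at hxz hyz
  exact hxy (hxz.trans hyz.symm)

-- One of the two kernel vertices of the first member lies on no other member of the path, and a new
-- first member can be attached there.
theorem exists_isLinearPath_of_two_kernel_vertices (hF : (F : Set (Finset V)).Sized k)
    (hne : F.Nonempty)
    (hker : ∀ e ∈ F, ∃ x ∈ e, ∃ y ∈ e, x ≠ y ∧ IsKernel m F {x} ∧ IsKernel m F {y})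
    (hm : L * k ≤ m) : ∃ P, IsLinearPath F L P := by
  induction L with
  | zero => exact ⟨fun _ => ∅, by simp, by simp, by simp⟩
  | succ L ih =>
    obtain rfl | hL := L.eq_zero_or_pos
    · obtain ⟨e, he⟩ := hne
      exact ⟨fun _ => e, fun _ _ => he, by lia, by lia⟩
    obtain ⟨P, hP⟩ := ih ((Nat.mul_le_mul_right k L.le_succ).trans hm)
    obtain ⟨x, hx, hxker, hxP⟩ :
        ∃ x ∈ P 0, IsKernel m F {x} ∧ ∀ i < L, 0 < i → x ∉ P i := by
      obtain ⟨x, hx, y, hy, hxy, hxker, hyker⟩ := hker _ (hP.mem 0 hL)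
      obtain h | h := hP.forall_notMem_or_forall_notMem hx hy hxy
      exacts [⟨x, hx, hxker, h⟩, ⟨y, hy, hyker, h⟩]
    have hcard : #((range L).biUnion P) ≤ m := calc
      #((range L).biUnion P) ≤ #(range L) * k :=
        card_biUnion_le_card_mul _ _ _ fun i hi => (hF (hP.mem i (mem_range.1 hi))).le
      _ ≤ m := by rw [card_range]; exact (Nat.mul_le_mul_right k L.le_succ).trans hm
    obtain ⟨e, he, hxe, hdisj⟩ := hxker _ hcard
    rw [disjoint_biUnion_right] at hdisj
    refine ⟨_, hP.prepend he ?_ fun i hi hpos => ?_⟩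
    · have := hdisj 0 (by simpa)
      exact card_eq_one.2 ⟨x, by grind [Finset.disjoint_left]⟩
    · have := hdisj i (by simpa)
      have := hxP i hi hpos
      grind [Finset.disjoint_left]

end Kernels

/-! ### Zigzags -/

section Zigzag

variable {V : Type*} {R : V → V → Prop} {w : ℕ → V} {v : V} {L j : ℕ}

/-- An antidirected path `w 0 → w 1 ← w 2 → ⋯` with `L` arcs of the digraph `R`, starting at a tail.
The values of `w` beyond `L` are irrelevant. -/
structure IsZigzag (R : V → V → Prop) (L : ℕ) (w : ℕ → V) : Prop where
  injOn : Set.InjOn w (Set.Iic L)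
  even : ∀ i < L, Even i → R (w i) (w (i + 1))
  odd : ∀ i < L, Odd i → R (w (i + 1)) (w i)

theorem IsZigzag.prepend (hw : IsZigzag (flip R) L w) (hv : R v (w 0))
    (hfresh : ∀ i ≤ L, w i ≠ v) : IsZigzag R (L + 1) (prepend v w) where
  injOn
    | 0, _, 0, _, _ => rfl
    | 0, _, j + 1, hj, h => absurd h.symm (hfresh j (Nat.le_of_succ_le_succ hj))
    | i + 1, hi, 0, _, h => absurd h (hfresh i (Nat.le_of_succ_le_succ hi))
    | i + 1, hi, j + 1, hj, h =>
      congrArg _ (hw.injOn (Nat.le_of_succ_le_succ hi) (Nat.le_of_succ_le_succ hj) h)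
  even
    | 0, _, _ => hv
    | i + 1, hi, h => hw.odd i (Nat.lt_of_succ_lt_succ hi) (by grind)
  odd
    | i + 1, hi, h => hw.even i (Nat.lt_of_succ_lt_succ hi) (by grind)

theorem isZigzag_zero : IsZigzag R 0 w where
  injOn _ hi _ hj _ := (Nat.le_zero.1 hi).trans (Nat.le_zero.1 hj).symm
  even _ hi := absurd hi (Nat.not_lt_zero _)
  odd _ hi := absurd hi (Nat.not_lt_zero _)

variable {S T X : Finset V}

theorem exists_isZigzag_of_forall_exists_notMem
    (hS : ∀ x ∈ S, ∀ X : Finset V, #X ≤ L → ∃ y ∈ T, y ∉ X ∧ R x y)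
    (hT : ∀ y ∈ T, ∀ X : Finset V, #X ≤ L → ∃ x ∈ S, x ∉ X ∧ R x y)
    (hv : v ∈ S) (hvX : v ∉ X) (hX : #X + j ≤ L) :
    ∃ w, w 0 = v ∧ IsZigzag R j w ∧ ∀ i ≤ j, w i ∉ X := by
  classical
  induction j generalizing R S T v X with
  | zero => exact ⟨fun _ => v, rfl, isZigzag_zero, fun _ _ => hvX⟩
  | succ j ih =>
    have hcard : #(insert v X) + j ≤ L := by rw [card_insert_of_notMem hvX]; lia
    obtain ⟨y, hy, hyX, hvy⟩ := hS v hv (insert v X) (by lia)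
    obtain ⟨w, rfl, hw, hwX⟩ := ih (R := flip R) hT hS hy hyX hcard
    simp only [mem_insert, not_or] at hwX
    refine ⟨prepend v w, rfl, hw.prepend hvy fun i hi => (hwX i hi).1, ?_⟩
    rintro (_ | i) hi
    exacts [hvX, (hwX i (by lia)).2]

-- Deleting vertices of degree at most `L` one by one loses at most `L` arcs each; what survives has
-- minimum degree above `L`, so a zigzag could be grown in it greedily.
theorem sum_card_bipartiteAbove_le_of_forall_not_isZigzag [DecidableRel R]
    (hR : ∀ w, ¬ IsZigzag R L w) (S T : Finset V) :
    ∑ x ∈ S, #(T.bipartiteAbove R x) ≤ L * (#S + #T) := by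
  classical
  induction hn : #S + #T generalizing S T with
  | zero => simp [card_eq_zero.1 (by lia : #S = 0)]
  | succ n ih =>
    have exists_notMem {s X : Finset V} (hs : L < #s) (hX : #X ≤ L) : ∃ y ∈ s, y ∉ X :=
      exists_mem_notMem_of_card_lt_card (hX.trans_lt hs)
    by_cases hSdeg : ∃ x ∈ S, #(T.bipartiteAbove R x) ≤ L
    · obtain ⟨x, hx, hdeg⟩ := hSdeg
      have := ih (S.erase x) T (by grind)
      rw [← add_sum_erase S _ hx]
      lia
    by_cases hTdeg : ∃ y ∈ T, #(S.bipartiteBelow R y) ≤ L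
    · obtain ⟨y, hy, hdeg⟩ := hTdeg
      have := ih S (T.erase y) (by grind)
      rw [sum_card_bipartiteAbove_eq_sum_card_bipartiteBelow] at this ⊢
      rw [← add_sum_erase T _ hy]
      lia
    push Not at hSdeg hTdeg
    obtain rfl | ⟨v, hv⟩ := S.eq_empty_or_nonempty
    · simp
    obtain ⟨w, -, hw, -⟩ := exists_isZigzag_of_forall_exists_notMem (R := R) (X := ∅)
      (fun x hx X hX => by
        obtain ⟨y, hy, hyX⟩ := exists_notMem (hSdeg x hx) hX
        exact ⟨y, (mem_filter.1 hy).1, hyX, (mem_filter.1 hy).2⟩)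
      (fun y hy X hX => by
        obtain ⟨x, hx, hxX⟩ := exists_notMem (hTdeg y hy) hX
        exact ⟨x, (mem_filter.1 hx).1, hxX, (mem_filter.1 hx).2⟩)
      hv (notMem_empty v) (card_empty (α := V) ▸ (zero_add L).le)
    exact absurd hw (hR w)

variable [DecidableEq V]

theorem exists_isZigzag_of_complete (hST : Disjoint S T) (hR : ∀ x ∈ S, ∀ y ∈ T, R x y)
    (hv : v ∈ S) (hS : j / 2 + 1 ≤ #S) (hT : (j + 1) / 2 ≤ #T) :
    ∃ w, w 0 = v ∧ IsZigzag R j w ∧ ∀ i ≤ j, w i ∈ S ∪ T := by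
  induction j generalizing R S T v with
  | zero =>
    exact ⟨fun _ => v, rfl, isZigzag_zero, fun _ _ => mem_union_left _ hv⟩
  | succ j ih =>
    obtain ⟨y, hy⟩ : T.Nonempty := card_pos.1 (by lia)
    have hcard : #(S.erase v) = #S - 1 := card_erase_of_mem hv
    obtain ⟨w, rfl, hw, hwST⟩ := ih (R := flip R) (hST.symm.mono_right (erase_subset v S))
      (fun y hy x hx => hR x (mem_of_mem_erase hx) y hy) hy (by lia) (by lia)
    refine ⟨prepend v w, rfl, hw.prepend (hR v hv _ hy) fun i hi => ?_, ?_⟩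
    · grind [Finset.disjoint_left]
    · rintro (_ | i) hi
      · exact mem_union_left _ hv
      · have := hwST i (by lia)
        grind [prepend]

/-- The arc relation `x → y` of the kernel digraph of `F`; the head `y` need not be a kernel. -/
def KernelArc (m : ℕ) (F : Finset (Finset V)) (x y : V) : Prop :=
  IsKernel m F {x} ∧ IsKernel m F {x, y}

theorem IsZigzag.exists_isLinearPath {F : Finset (Finset V)} {k m t : ℕ}
    (hF : (F : Set (Finset V)).Sized k) (ht : 1 ≤ t) (hm : 2 * t + 1 + (2 * t + 2) * k ≤ m)
    (hw : IsZigzag (KernelArc m F) (2 * t) w) : ∃ P, IsLinearPath F (2 * t + 2) P := by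
  refine exists_isLinearPath_of_kernel_walk hF hw.injOn
    (hw.even 0 (by lia) Even.zero).1 (fun i hi => ?_) ?_ hm
  · obtain h | h := i.even_or_odd
    · exact (hw.even i hi h).2
    · exact pair_comm (w i) _ ▸ (hw.odd i hi h).2
  · have := (hw.odd (2 * t - 1) (by lia) (by grind)).1
    rwa [Nat.sub_add_cancel (by lia)] at this

end Zigzag

/-! ### Rainbow colourings -/

section Rainbow

variable {V κ : Type*}

/-- The colouring `χ` gives every colour to exactly one vertex of `e`, so that vertices of different
members of a family can be compared by colour. -/
def IsRainbow (χ : V → κ) (e : Finset V) : Prop :=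
  Set.BijOn χ e Set.univ

/-- The vertices of `e` coloured by `A`: the copy on `e` of the intersection pattern `A`. -/
def colorPart [DecidableEq κ] (χ : V → κ) (A : Finset κ) (e : Finset V) : Finset V :=
  {v ∈ e | χ v ∈ A}

theorem card_fun_le_mul_card_isRainbow [Fintype V] [DecidableEq V] [Fintype κ]
    {e : Finset V} [DecidablePred fun χ : V → κ => IsRainbow χ e] (he : #e = Fintype.card κ) :
    Fintype.card (V → κ) ≤
      Fintype.card κ ^ Fintype.card κ * #{χ : V → κ | IsRainbow χ e} := by
  classical
  let b : e ≃ κ := Fintype.equivOfCardEq (by rw [Fintype.card_coe, he])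
  let recolor (χ : V → κ) (v : V) : κ := if h : v ∈ e then b ⟨v, h⟩ else χ v
  have recolor_apply (χ) (v : e) : recolor χ v = b v := dif_pos v.2
  have hrainbow (χ) : IsRainbow (recolor χ) e := by
    refine ⟨fun _ _ => Set.mem_univ _, fun v hv w hw h => ?_, fun c _ => ?_⟩
    · rw [recolor_apply χ ⟨v, hv⟩, recolor_apply χ ⟨w, hw⟩] at h
      exact congrArg Subtype.val (b.injective h)
    · exact ⟨b.symm c, (b.symm c).2, by rw [recolor_apply, b.apply_symm_apply]⟩
  have hinj : Function.Injective fun χ : V → κ =>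
      ((fun v : e => χ v, ⟨recolor χ, hrainbow χ⟩) : (e → κ) × {χ : V → κ // IsRainbow χ e}) := by
    intro χ χ' h
    simp only [Prod.mk.injEq, Subtype.mk.injEq] at h
    funext v
    by_cases hv : v ∈ e
    · exact congrFun h.1 ⟨v, hv⟩
    · simpa [recolor, hv] using congrFun h.2 v
  simpa [Fintype.card_subtype, he] using Fintype.card_le_of_injective _ hinj

theorem exists_coloring_card_le_mul_card_isRainbow [Finite V] [Fintype κ] [Nonempty κ]
    {F : Finset (Finset V)} (hF : (F : Set (Finset V)).Sized (Fintype.card κ)) :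
    ∃ χ : V → κ, ∃ H ⊆ F, (∀ e ∈ H, IsRainbow χ e) ∧
      #F ≤ Fintype.card κ ^ Fintype.card κ * #H := by
  classical
  have := Fintype.ofFinite V
  have hsum : ∑ _χ : V → κ, #F ≤
      ∑ χ : V → κ, Fintype.card κ ^ Fintype.card κ * #(F.bipartiteAbove IsRainbow χ) := calc
    ∑ _χ : V → κ, #F = ∑ _e ∈ F, Fintype.card (V → κ) := by simp [mul_comm]
    _ ≤ ∑ e ∈ F, Fintype.card κ ^ Fintype.card κ * #(univ.bipartiteBelow IsRainbow e) :=
      sum_le_sum fun e he => card_fun_le_mul_card_isRainbow (hF he)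
    _ = _ := by
      rw [← mul_sum, ← mul_sum, sum_card_bipartiteAbove_eq_sum_card_bipartiteBelow]
  obtain ⟨χ, -, hχ⟩ := exists_le_of_sum_le univ_nonempty hsum
  exact ⟨χ, _, filter_subset _ F, fun e he => (mem_filter.1 he).2, hχ⟩

variable [DecidableEq κ] {χ : V → κ} {e e' : Finset V} {A B : Finset κ}

theorem colorPart_subset : colorPart χ A e ⊆ e :=
  filter_subset _ e

theorem IsRainbow.image_colorPart (he : IsRainbow χ e) : (colorPart χ A e).image χ = A := by
  ext c
  obtain ⟨v, hv, rfl⟩ := he.surjOn (Set.mem_univ c)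
  have := he.injOn
  grind [colorPart, Set.InjOn]

theorem IsRainbow.card_colorPart (he : IsRainbow χ e) : #(colorPart χ A e) = #A := by
  conv_rhs => rw [← he.image_colorPart (A := A)]
  exact (card_image_of_injOn (he.injOn.mono (coe_subset.2 colorPart_subset))).symm

theorem IsRainbow.image_eq_univ [Fintype κ] (he : IsRainbow χ e) : e.image χ = univ := by
  rw [← coe_inj, coe_image, coe_univ, he.image_eq]

theorem IsRainbow.colorPart_eq_of_subset (he : IsRainbow χ e) (he' : IsRainbow χ e')
    (h : colorPart χ A e ⊆ e') : colorPart χ A e' = colorPart χ A e :=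
  (eq_of_subset_of_card_le (fun _ hv => mem_filter.2 ⟨h hv, (mem_filter.1 hv).2⟩)
    (he'.card_colorPart.trans he.card_colorPart.symm).le).symm

theorem IsRainbow.colorPart_singleton (he : IsRainbow χ e) {v : V} (hv : v ∈ e) :
    colorPart χ {χ v} e = {v} := by
  have := he.injOn
  grind [colorPart, Set.InjOn]

variable [DecidableEq V]

theorem colorPart_inter : colorPart χ (A ∩ B) e = colorPart χ A e ∩ colorPart χ B e := by
  grind [colorPart]

theorem IsRainbow.colorPart_image_inter (he : IsRainbow χ e) :
    colorPart χ ((e ∩ e').image χ) e = e ∩ e' := by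
  have := he.injOn
  grind [colorPart, Set.InjOn]

theorem IsRainbow.image_inter_ne_univ [Fintype κ] (he : IsRainbow χ e) (he' : IsRainbow χ e')
    (hne : e ≠ e') : (e ∩ e').image χ ≠ univ := by
  intro h
  have hsub {e e' : Finset V} (he : IsRainbow χ e) (h : (e ∩ e').image χ = univ) : e ⊆ e' := by
    rw [← inter_eq_left, ← he.colorPart_image_inter, h]
    simp [colorPart]
  exact hne ((hsub he h).antisymm (hsub he' (inter_comm e e' ▸ h)))

end Rainbow

/-! ### Homogeneous subfamilies -/

section Homogeneous

variable {V κ : Type*} [DecidableEq V] [DecidableEq κ] {F G H : Finset (Finset V)}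
  {χ : V → κ} {J : Finset (Finset κ)} {k m : ℕ}

/-- Füredi's homogeneity: all members of `G` see the same intersection pattern `J` through the
colouring `χ`. Every set of colours in `J` cuts out a kernel of `G` on each member, and every
intersection of two members has its set of colours in `J`. -/
structure IsHomogeneous (m : ℕ) (χ : V → κ) (J : Finset (Finset κ)) (G : Finset (Finset V)) :
    Prop where
  rainbow : ∀ e ∈ G, IsRainbow χ e
  kernel : ∀ e ∈ G, ∀ A ∈ J, IsKernel m G (colorPart χ A e)
  inter_mem : ∀ e ∈ G, ∀ e' ∈ G, e ≠ e' → (e ∩ e').image χ ∈ J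

theorem exists_card_le_mul_card_filter_mem {a : Finset V} (ha : ¬ IsKernel m H a)
    (hne : {e ∈ H | a ⊆ e}.Nonempty) :
    ∃ v ∉ a, #{e ∈ H | a ⊆ e} ≤ m * #{e ∈ H | a ⊆ e ∧ v ∈ e} := by
  simp only [IsKernel, not_forall, not_exists, not_and] at ha
  obtain ⟨X, hX, hmeet⟩ := ha
  have hmeet' : ∀ e ∈ H, a ⊆ e → ∃ v ∈ X \ a, v ∈ e := fun e he hae => by
    obtain ⟨v, hv, hvX⟩ := not_disjoint_iff.1 (hmeet e he hae)
    exact ⟨v, by grind, by grind⟩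
  have hXne : (X \ a).Nonempty := by
    obtain ⟨e, he⟩ := hne
    obtain ⟨v, hv, -⟩ := hmeet' e (mem_filter.1 he).1 (mem_filter.1 he).2
    exact ⟨v, hv⟩
  have hcover : {e ∈ H | a ⊆ e} ⊆ (X \ a).biUnion fun v => {e ∈ H | a ⊆ e ∧ v ∈ e} := fun e he => by
    have := hmeet' e
    grind
  obtain ⟨v, hv, hle⟩ := exists_le_of_sum_le hXne (f := fun _ => #{e ∈ H | a ⊆ e})
    (g := fun v => m * #{e ∈ H | a ⊆ e ∧ v ∈ e}) <| calc
      ∑ _v ∈ X \ a, #{e ∈ H | a ⊆ e} = #(X \ a) * #{e ∈ H | a ⊆ e} := by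
        rw [sum_const, smul_eq_mul]
      _ ≤ m * ∑ v ∈ X \ a, #{e ∈ H | a ⊆ e ∧ v ∈ e} :=
        Nat.mul_le_mul ((card_le_card sdiff_subset).trans hX)
          ((card_le_card hcover).trans card_biUnion_le)
      _ = ∑ v ∈ X \ a, m * #{e ∈ H | a ⊆ e ∧ v ∈ e} := mul_sum _ _ _
  exact ⟨v, (mem_sdiff.1 hv).2, hle⟩

theorem pairwise_union_image_inter_ne {A : Finset κ} {e₀ : Finset V} {v : V}
    {R : Finset (Finset V)} (hH : ∀ e ∈ H, IsRainbow χ e) (he₀ : e₀ ∈ H)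
    (hv : v ∉ colorPart χ A e₀) (hRsub : R ⊆ {e ∈ H | ¬ colorPart χ A e₀ ⊆ e})
    (hR : (R : Set (Finset V)).Pairwise fun e e' => (e ∩ e').image χ ≠ A) :
    ((R ∪ {e ∈ H | colorPart χ A e₀ ⊆ e ∧ v ∈ e} : Finset _) : Set (Finset V)).Pairwise
      fun e e' => (e ∩ e').image χ ≠ A := by
  have hinter : ∀ e ∈ H, colorPart χ A e₀ ⊆ e → ∀ e', (e ∩ e').image χ = A →
      e ∩ e' = colorPart χ A e₀ := fun e he hsub e' himage => by
    rw [← (hH e he).colorPart_image_inter, himage,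
      (hH e₀ he₀).colorPart_eq_of_subset (hH e he) hsub]
  have hne : ∀ e ∈ H, colorPart χ A e₀ ⊆ e → v ∈ e →
      ∀ e' ∈ R ∪ {e ∈ H | colorPart χ A e₀ ⊆ e ∧ v ∈ e}, (e ∩ e').image χ ≠ A :=
    fun e he hsub hve e' he' himage => by
      have := hinter e he hsub e' himage
      grind
  intro e he e' he' hee'
  obtain heR | heS := mem_union.1 he
  · obtain he'R | he'S := mem_union.1 he'
    · exact hR heR he'R hee'
    · rw [inter_comm]
      obtain ⟨he'H, hsub, hve'⟩ := mem_filter.1 he'S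
      exact hne e' he'H hsub hve' e he
  · obtain ⟨heH, hsub, hve⟩ := mem_filter.1 heS
    exact hne e heH hsub hve e' he'

-- While `colorPart χ A e₀` is not a kernel, discard the members containing it: some `v` lies in a
-- fraction `1 / m` of them, and no two of those that contain `v` meet in the pattern `A`.
theorem exists_subfamily_forall_isKernel (m : ℕ) (J : Finset (Finset κ))
    (hH : ∀ e ∈ H, IsRainbow χ e) :
    ∃ G ⊆ H, (∀ e ∈ G, ∀ A ∈ J, IsKernel m G (colorPart χ A e)) ∧
      ∃ R : Finset κ → Finset (Finset V),
        (∀ A, R A ⊆ H ∧ (R A : Set (Finset V)).Pairwise fun e e' => (e ∩ e').image χ ≠ A) ∧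
        #H ≤ #G + m * ∑ A ∈ J, #(R A) := by
  induction H using Finset.strongInduction with | H H ih =>
  by_cases hker : ∀ e ∈ H, ∀ A ∈ J, IsKernel m H (colorPart χ A e)
  · exact ⟨H, Subset.rfl, hker, fun _ => ∅, by simp, by simp⟩
  simp only [not_forall] at hker
  obtain ⟨e₀, he₀, A, hA, hnot⟩ := hker
  obtain ⟨v, hv, hpop⟩ := exists_card_le_mul_card_filter_mem hnot
    ⟨e₀, mem_filter.2 ⟨he₀, colorPart_subset⟩⟩
  set a := colorPart χ A e₀
  obtain ⟨G, hG, hGker, R, hR, hcard⟩ := ih {e ∈ H | ¬ a ⊆ e}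
    (filter_ssubset.2 ⟨e₀, he₀, not_not.2 colorPart_subset⟩)
    fun e he => hH e (mem_filter.1 he).1
  set S := {e ∈ H | a ⊆ e ∧ v ∈ e}
  refine ⟨G, hG.trans (filter_subset _ _), hGker, fun B => R B ∪ if B = A then S else ∅, ?_, ?_⟩
  · intro B
    dsimp only
    split_ifs with hB
    · subst hB
      exact ⟨union_subset ((hR B).1.trans (filter_subset _ _)) (filter_subset _ _),
        pairwise_union_image_inter_ne hH he₀ hv (hR B).1 (hR B).2⟩
    · rw [union_empty]
      exact ⟨(hR B).1.trans (filter_subset _ _), (hR B).2⟩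
  · have hdisj (B) : Disjoint (R B) (if B = A then S else ∅) := by
      have := (hR B).1
      grind [Finset.disjoint_left]
    have hsum : ∑ B ∈ J, #(R B ∪ if B = A then S else ∅) = ∑ B ∈ J, #(R B) + #S := by
      simp only [card_union_of_disjoint (hdisj _), sum_add_distrib, apply_ite Finset.card,
        card_empty, sum_ite_eq', hA, if_true]
    have := card_filter_add_card_filter_not (s := H) (a ⊆ ·)
    rw [hsum]
    lia

theorem exists_le_mul_of_le_add_sum {ι : Type*} {s : Finset ι} {a b c : ℕ} {f : ι → ℕ}
    (h : a ≤ b + c * ∑ i ∈ s, f i) :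
    a ≤ (#s + 1) * b ∨ ∃ i ∈ s, a ≤ (#s + 1) * c * f i := by
  by_contra! hlt
  have hsum : ∑ i ∈ s, (#s + 1) * c * f i ≤ #s * a := by
    simpa using sum_le_sum fun i hi => (hlt.2 i hi).le
  rw [← mul_sum] at hsum
  nlinarith [hlt.1]

theorem exists_isHomogeneous (m : ℕ) (J : Finset (Finset κ)) (hH : ∀ e ∈ H, IsRainbow χ e)
    (hJ : ∀ e ∈ H, ∀ e' ∈ H, e ≠ e' → (e ∩ e').image χ ∈ J) :
    ∃ J' ⊆ J, ∃ G ⊆ H, IsHomogeneous m χ J' G ∧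
      #H ≤ ((#J + 1) * (m + 1)) ^ (#J + 1) * #G := by
  induction J using Finset.strongInduction generalizing H with | H J ih =>
  obtain ⟨G, hG, hGker, R, hR, hcard⟩ := exists_subfamily_forall_isKernel m J hH
  obtain hle | ⟨A, hA, hle⟩ := exists_le_mul_of_le_add_sum hcard
  · refine ⟨J, Subset.rfl, G, hG, ⟨fun e he => hH e (hG he), hGker,
      fun e he e' he' => hJ e (hG he) e' (hG he')⟩, hle.trans (Nat.mul_le_mul_right _ ?_)⟩
    exact (Nat.le_mul_of_pos_right _ m.succ_pos).trans (Nat.le_self_pow (Nat.succ_ne_zero _) _)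
  · obtain ⟨J', hJ', G', hG', hhom, hle'⟩ := ih (J.erase A) (erase_ssubset hA) (H := R A)
      (fun e he => hH e ((hR A).1 he)) fun e he e' he' hne => mem_erase.2
        ⟨(hR A).2 he he' hne, hJ e ((hR A).1 he) e' ((hR A).1 he') hne⟩
    refine ⟨J', hJ'.trans (erase_subset _ _), G', hG'.trans (hR A).1, hhom, ?_⟩
    rw [card_erase_add_one hA] at hle'
    calc #H ≤ (#J + 1) * m * #(R A) := hle
      _ ≤ (#J + 1) * (m + 1) * (((#J + 1) * (m + 1)) ^ #J * #G') := by
        gcongr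
        · exact m.le_succ
        · exact hle'.trans (by gcongr; exact (#J).le_succ)
      _ = ((#J + 1) * (m + 1)) ^ (#J + 1) * #G' := by ring

theorem IsHomogeneous.infClosed [Fintype κ] (hG : IsHomogeneous m χ J G)
    (hsized : (G : Set (Finset V)).Sized k) (hm : 2 * k ≤ m) (hne : G.Nonempty)
    (hJ : univ ∉ J) : InfClosed (J : Set (Finset κ)) := by
  intro A hA B hB
  obtain ⟨e, he⟩ := hne
  obtain ⟨e₁, he₁, hA₁, hdisj₁⟩ := hG.kernel e he A hA e (by have := hsized he; lia)
  obtain ⟨e₂, he₂, hB₂, hdisj₂⟩ := hG.kernel e he B hB (e ∪ e₁) <| (card_union_le _ _).trans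
    (by have := hsized he; have := hsized he₁; lia)
  have hinter : e₁ ∩ e₂ = colorPart χ (A ∩ B) e := by
    rw [disjoint_union_right] at hdisj₂
    have : colorPart χ B e ⊆ e := colorPart_subset
    rw [colorPart_inter]
    grind [Finset.disjoint_left]
  have himage : (e₁ ∩ e₂).image χ = A ∩ B := by rw [hinter, (hG.rainbow e he).image_colorPart]
  have hne : e₁ ≠ e₂ := by
    rintro rfl
    rw [inter_self, (hG.rainbow e₁ he₁).image_eq_univ] at himage
    have : A = univ := eq_univ_iff_forall.2 fun c => by grind [mem_univ c]
    exact hJ (this ▸ hA)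
  simpa [himage] using hG.inter_mem e₁ he₁ e₂ he₂ hne

theorem IsHomogeneous.card_le_choose [Fintype V] {D : Finset κ} (hG : IsHomogeneous m χ J G)
    (hD : ∀ A ∈ J, ¬ D ⊆ A) : #G ≤ (Fintype.card V).choose #D := by
  rw [← card_univ, ← card_powersetCard]
  refine card_le_card_of_injOn (colorPart χ D)
    (fun e he => mem_powersetCard_univ.2 (hG.rainbow e he).card_colorPart) fun e he e' he' h => ?_
  by_contra hne
  refine hD _ (hG.inter_mem e he e' he' hne) ?_
  have hsub : colorPart χ D e ⊆ e ∩ e' :=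
    subset_inter colorPart_subset (h ▸ colorPart_subset)
  simpa [(hG.rainbow e he).image_colorPart] using image_subset_image (f := χ) hsub

end Homogeneous

/-! ### Intersection patterns -/

section Patterns

variable {κ : Type*} [Fintype κ] [DecidableEq κ] {J : Finset (Finset κ)}

theorem mem_of_infClosed_of_forall_notMem {B : Finset κ} (hJ : InfClosed (J : Set (Finset κ)))
    (hB : B ≠ univ) (hsep : ∀ x ∉ B, ∃ A ∈ J, B ⊆ A ∧ x ∉ A) : B ∈ J := by
  choose! A hAJ hBA hxA using hsep
  have hne : Bᶜ.Nonempty := by rwa [nonempty_iff_ne_empty, Ne, compl_eq_empty_iff]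
  have hinf : Bᶜ.inf' hne A = B := by
    refine Subset.antisymm (fun x hx => ?_) (le_inf' _ _ fun x hx => hBA x (mem_compl.1 hx))
    by_contra hxB
    exact hxA x hxB (inf'_le A (mem_compl.2 hxB) hx)
  exact mem_coe.1 (hinf ▸ hJ.finsetInf'_mem hne fun x hx => hAJ x (mem_compl.1 hx))

theorem compl_pair_mem_of_covered (huniv : univ ∉ J)
    (hcov : ∀ D : Finset κ, #D = Fintype.card κ - 2 → ∃ A ∈ J, D ⊆ A) {v w : κ} (hvw : v ≠ w)
    (hv : {v}ᶜ ∉ J) (hw : {w}ᶜ ∉ J) : {v, w}ᶜ ∈ J := by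
  obtain ⟨A, hA, hsub⟩ := hcov {v, w}ᶜ (by rw [card_compl, card_pair hvw])
  have hcases : A = univ ∨ A = {v}ᶜ ∨ A = {w}ᶜ ∨ A = {v, w}ᶜ := by
    by_cases hvA : v ∈ A <;> by_cases hwA : w ∈ A <;> grind [Finset.mem_compl]
  obtain rfl | rfl | rfl | rfl := hcases
  exacts [absurd hA huniv, absurd hA hv, absurd hA hw, hA]

theorem singleton_mem_of_card_erase_ne_one (hκ : 2 ≤ Fintype.card κ)
    (hJ : InfClosed (J : Set (Finset κ)))
    (hpair : ∀ v w, v ≠ w → {v}ᶜ ∉ J → {w}ᶜ ∉ J → {v, w}ᶜ ∈ J) {u : κ}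
    (hu : #(({v | {v}ᶜ ∉ J} : Finset κ).erase u) ≠ 1) : {u} ∈ J := by
  refine mem_of_infClosed_of_forall_notMem hJ (fun h => ?_) fun x hx => ?_
  · have := congrArg card h
    simp only [card_singleton, card_univ] at this
    lia
  by_cases hxJ : {x}ᶜ ∈ J
  · exact ⟨_, hxJ, by grind [Finset.mem_compl], by simp⟩
  have hxmem : x ∈ ({v | {v}ᶜ ∉ J} : Finset κ).erase u := by grind
  have hcard : 1 < #(({v | {v}ᶜ ∉ J} : Finset κ).erase u) := by
    have := card_pos.2 ⟨x, hxmem⟩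
    lia
  obtain ⟨y, hy, hyx⟩ := exists_mem_ne hcard x
  exact ⟨{x, y}ᶜ, hpair x y hyx.symm hxJ (by grind), by grind [Finset.mem_compl], by simp⟩

theorem two_singletons_mem_or_center (hκ : 4 ≤ Fintype.card κ)
    (hJ : InfClosed (J : Set (Finset κ))) (huniv : univ ∉ J)
    (hcov : ∀ D : Finset κ, #D = Fintype.card κ - 2 → ∃ A ∈ J, D ⊆ A) :
    (∃ c d, c ≠ d ∧ {c} ∈ J ∧ {d} ∈ J) ∨ ∃ c, {c} ∈ J ∧ ∀ y ≠ c, {c, y} ∈ J := by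
  have hsingle (u) := singleton_mem_of_card_erase_ne_one (u := u) (by lia) hJ
    fun v w hvw => compl_pair_mem_of_covered huniv hcov hvw
  set N : Finset κ := {v | {v}ᶜ ∉ J} with hN
  by_cases hone : #N = 1
  · right
    obtain ⟨c, hc⟩ := card_eq_one.1 hone
    refine ⟨c, hsingle c (by simp [hc]), fun y hy => ?_⟩
    refine mem_of_infClosed_of_forall_notMem hJ (fun h => ?_) fun x hx => ?_
    · have := congrArg card h
      rw [card_pair hy.symm, card_univ] at this
      lia
    · have hxJ : {x}ᶜ ∈ J := by
        by_contra hxJ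
        have : x ∈ N := by simpa [hN] using hxJ
        grind
      exact ⟨{x}ᶜ, hxJ, by grind [Finset.mem_compl], by simp⟩
  · left
    by_cases htwo : #N = 2
    · have hcompl : 1 < #Nᶜ := by
        rw [card_compl]
        lia
      obtain ⟨c, hc, d, hd, hcd⟩ := one_lt_card.1 hcompl
      rw [mem_compl] at hc hd
      exact ⟨c, d, hcd, hsingle c (by rwa [erase_eq_of_notMem hc]),
        hsingle d (by rwa [erase_eq_of_notMem hd])⟩
    · have hall (u) : {u} ∈ J := hsingle u (by rw [card_erase_eq_ite]; split_ifs <;> lia)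
      obtain ⟨c, d, hcd⟩ := Fintype.one_lt_card_iff.1 (by lia : 1 < Fintype.card κ)
      exact ⟨c, d, hcd, hall c, hall d⟩

end Patterns

section Centerless

variable {V κ : Type*}

/-- Some vertex of `e` is `R`-related to every other vertex of `e`. -/
def HasCenter (R : V → V → Prop) (e : Finset V) : Prop :=
  ∃ c ∈ e, ∀ y ∈ e, y ≠ c → R c y

theorem HasCenter.imp {R R' : V → V → Prop} {e : Finset V} (h : ∀ x y, R x y → R' x y) :
    HasCenter R e → HasCenter R' e
  | ⟨c, hc, hR⟩ => ⟨c, hc, fun y hy hyc => h c y (hR y hy hyc)⟩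

variable [DecidableEq V] {F G : Finset (Finset V)} {k m L : ℕ}

theorem IsHomogeneous.exists_mem_isKernel_singleton [DecidableEq κ] {χ : V → κ}
    {J : Finset (Finset κ)} (hG : IsHomogeneous m χ J G) {e : Finset V} (he : e ∈ G) {c : κ}
    (hc : {c} ∈ J) : ∃ x ∈ e, χ x = c ∧ IsKernel m G {x} := by
  obtain ⟨x, hx, rfl⟩ := (hG.rainbow e he).surjOn (Set.mem_univ c)
  exact ⟨x, hx, rfl, (hG.rainbow e he).colorPart_singleton hx ▸ hG.kernel e he _ hc⟩

theorem IsHomogeneous.hasCenter [DecidableEq κ] {χ : V → κ} {J : Finset (Finset κ)}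
    (hG : IsHomogeneous m χ J G) {e : Finset V} (he : e ∈ G) {c : κ} (hc : {c} ∈ J)
    (hcy : ∀ y ≠ c, {c, y} ∈ J) : HasCenter (KernelArc m G) e := by
  obtain ⟨x, hx, rfl, hxker⟩ := hG.exists_mem_isKernel_singleton he hc
  have hrainbow := hG.rainbow e he
  refine ⟨x, hx, fun y hy hyx => ⟨hxker, ?_⟩⟩
  have hpair : colorPart χ {χ x, χ y} e = {x, y} := by
    have := hrainbow.injOn
    grind [colorPart, Set.InjOn]
  exact hpair ▸ hG.kernel e he _ (hcy _ fun h => hyx (hrainbow.injOn hy hx h))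

theorem IsHomogeneous.card_le_choose_of_forall_not_hasCenter [Fintype V] [Fintype κ]
    [DecidableEq κ] {χ : V → κ} {J : Finset (Finset κ)} (hG : IsHomogeneous m χ J G)
    (hsized : (G : Set (Finset V)).Sized (Fintype.card κ)) (hκ : 4 ≤ Fintype.card κ)
    (hJ : univ ∉ J) (hm : 2 * Fintype.card κ ≤ m) (hL : L * Fintype.card κ ≤ m)
    (hpath : ∀ P, ¬ IsLinearPath G L P) (hcenter : ∀ e ∈ G, ¬ HasCenter (KernelArc m G) e) :
    #G ≤ (Fintype.card V).choose (Fintype.card κ - 2) := by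
  by_contra hlt
  have hne : G.Nonempty := card_pos.1 (by lia)
  have hcov : ∀ D : Finset κ, #D = Fintype.card κ - 2 → ∃ A ∈ J, D ⊆ A := by
    intro D hD
    by_contra! hunc
    exact hlt (hD ▸ hG.card_le_choose hunc)
  obtain ⟨c, d, hcd, hc, hd⟩ | ⟨c, hc, hcy⟩ :=
    two_singletons_mem_or_center hκ (hG.infClosed hsized hm hne hJ) hJ hcov
  · obtain ⟨P, hP⟩ := exists_isLinearPath_of_two_kernel_vertices hsized hne (fun e he => by
      obtain ⟨x, hx, rfl, hxker⟩ := hG.exists_mem_isKernel_singleton he hc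
      obtain ⟨y, hy, rfl, hyker⟩ := hG.exists_mem_isKernel_singleton he hd
      exact ⟨x, hx, y, hy, fun h => hcd (congrArg χ h), hxker, hyker⟩) hL
    exact hpath P hP
  · obtain ⟨e, he⟩ := hne
    exact hcenter e he (hG.hasCenter he hc hcy)

theorem KernelArc.mono {x y : V} (hGF : G ⊆ F) (h : KernelArc m G x y) : KernelArc m F x y :=
  ⟨h.1.mono hGF, h.2.mono hGF⟩

theorem card_le_mul_choose_of_forall_not_hasCenter [Fintype V]
    (hF : (F : Set (Finset V)).Sized k) (hk : 4 ≤ k) (hm : 2 * k ≤ m) (hL : L * k ≤ m)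
    (hpath : ∀ P, ¬ IsLinearPath F L P) (hcenter : ∀ e ∈ F, ¬ HasCenter (KernelArc m F) e) :
    #F ≤ k ^ k * (2 ^ k * (m + 1)) ^ 2 ^ k * (Fintype.card V).choose (k - 2) := by
  have hcard : Fintype.card (Fin k) = k := Fintype.card_fin k
  have : NeZero k := ⟨by lia⟩
  obtain ⟨χ, H, hHF, hH, hFH⟩ :=
    exists_coloring_card_le_mul_card_isRainbow (κ := Fin k) (hcard.symm ▸ hF)
  obtain ⟨J, hJ, G, hGH, hG, hHG⟩ := exists_isHomogeneous m (univ.erase univ) hH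
    fun e he e' he' hne => mem_erase.2 ⟨(hH e he).image_inter_ne_univ (hH e' he') hne, mem_univ _⟩
  rw [card_erase_add_one (mem_univ _), card_univ, Fintype.card_finset, hcard] at hHG
  have hGF : G ⊆ F := hGH.trans hHF
  have hGcard := hG.card_le_choose_of_forall_not_hasCenter
    (hcard.symm ▸ hF.mono (coe_subset.2 hGF)) (by rwa [hcard]) (fun h => by simpa using hJ h)
    (by rwa [hcard]) (by rwa [hcard]) (fun P hP => hpath P (hP.mono hGF))
    fun e he h => hcenter e (hGF he) (h.imp fun _ _ => KernelArc.mono hGF)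
  rw [hcard] at hGcard hFH
  calc #F ≤ k ^ k * #H := hFH
    _ ≤ k ^ k * ((2 ^ k * (m + 1)) ^ 2 ^ k * #G) := Nat.mul_le_mul_left _ hHG
    _ ≤ k ^ k * (2 ^ k * (m + 1)) ^ 2 ^ k * (Fintype.card V).choose (k - 2) := by
      rw [← mul_assoc]
      exact Nat.mul_le_mul_left _ hGcard

end Centerless

/-! ### Hubs -/

section Hubs

variable {V : Type*} [Fintype V] {R : V → V → Prop} [DecidableRel R]
  {F : Finset (Finset V)} {q t L r k : ℕ}

/-- The vertices of out-degree at least `|V| / q`. -/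
def hubs (R : V → V → Prop) [DecidableRel R] (q : ℕ) : Finset V :=
  {x | Fintype.card V ≤ q * #(univ.bipartiteAbove R x)}

theorem card_hubs_le (hR : ∀ w, ¬ IsZigzag R L w) : #(hubs R q) ≤ 2 * L * q := by
  obtain hV | hV := (Fintype.card V).eq_zero_or_pos
  · exact (card_le_univ _).trans (by lia)
  refine Nat.le_of_mul_le_mul_right ?_ hV
  calc #(hubs R q) * Fintype.card V
      ≤ ∑ x ∈ hubs R q, q * #(univ.bipartiteAbove R x) :=
        card_nsmul_le_sum _ _ _ fun x hx => (mem_filter.1 hx).2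
    _ = q * ∑ x ∈ hubs R q, #(univ.bipartiteAbove R x) := (mul_sum _ _ _).symm
    _ ≤ q * ∑ x, #(univ.bipartiteAbove R x) :=
        Nat.mul_le_mul_left _ (sum_le_sum_of_subset (subset_univ _))
    _ ≤ q * (L * (Fintype.card V + Fintype.card V)) :=
        Nat.mul_le_mul_left _ (sum_card_bipartiteAbove_le_of_forall_not_isZigzag hR univ univ)
    _ = 2 * L * q * Fintype.card V := by ring

theorem mul_choose_le_of_notMem_hubs {c : V} (hr : 2 ≤ r) (hc : c ∉ hubs R q) :
    q * (#(univ.bipartiteAbove R c)).choose r ≤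
      #(univ.bipartiteAbove R c) * Fintype.card V ^ (r - 1) := by
  set o := #(univ.bipartiteAbove R c)
  have hqo : q * o ≤ Fintype.card V := by
    by_contra! hlt
    exact hc (mem_filter.2 ⟨mem_univ c, hlt.le⟩)
  obtain ⟨s, rfl⟩ := Nat.exists_eq_add_of_le' hr
  calc q * o.choose (s + 2) ≤ q * o ^ (s + 2) := Nat.mul_le_mul_left _ (Nat.choose_le_pow _ _)
    _ = o * (q * o * o ^ s) := by ring
    _ ≤ o * (Fintype.card V * Fintype.card V ^ s) := by
      gcongr
      exact card_le_univ _
    _ = o * Fintype.card V ^ (s + 2 - 1) := by rw [← pow_succ']; rfl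

theorem mul_sum_compl_hubs_choose_le [DecidableEq V] (hr : 2 ≤ r) (hR : ∀ w, ¬ IsZigzag R L w) :
    q * ∑ c ∈ (hubs R q)ᶜ, (#(univ.bipartiteAbove R c)).choose r ≤
      2 * L * Fintype.card V ^ r := calc
  q * ∑ c ∈ (hubs R q)ᶜ, (#(univ.bipartiteAbove R c)).choose r
    ≤ ∑ c ∈ (hubs R q)ᶜ, #(univ.bipartiteAbove R c) * Fintype.card V ^ (r - 1) := by
      rw [mul_sum]
      exact sum_le_sum fun c hc => mul_choose_le_of_notMem_hubs hr (mem_compl.1 hc)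
  _ ≤ (∑ c, #(univ.bipartiteAbove R c)) * Fintype.card V ^ (r - 1) := by
      rw [← sum_mul]
      exact Nat.mul_le_mul_right _ (sum_le_sum_of_subset (subset_univ _))
  _ ≤ L * (Fintype.card V + Fintype.card V) * Fintype.card V ^ (r - 1) :=
      Nat.mul_le_mul_right _ (sum_card_bipartiteAbove_le_of_forall_not_isZigzag hR univ univ)
  _ = 2 * L * (Fintype.card V * Fintype.card V ^ (r - 1)) := by ring
  _ = 2 * L * Fintype.card V ^ r := by rw [mul_pow_sub_one (by lia)]

variable [DecidableEq V]

/-- The boundedly many vertices to ignore: the hubs, and the vertices dominated by more than `t`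
of them. -/
def exceptional (R : V → V → Prop) [DecidableRel R] (q t : ℕ) : Finset V :=
  hubs R q ∪ {y ∈ (hubs R q)ᶜ | t < #((hubs R q).bipartiteBelow R y)}

/-- The hubs dominating `y`, reset to `∅` at exceptional vertices so that there are at most `t`. -/
def dominators (R : V → V → Prop) [DecidableRel R] (q t : ℕ) (y : V) : Finset V :=
  if y ∈ exceptional R q t then ∅ else (hubs R q).bipartiteBelow R y

theorem card_dominators_le (y : V) : #(dominators R q t y) ≤ t := by
  grind [dominators, exceptional, Finset.mem_compl]

theorem card_filter_lt_card_bipartiteBelow_le (hR : ∀ w, ¬ IsZigzag R (2 * t) w) (B : Finset V) :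
    #{y ∈ Bᶜ | t < #(B.bipartiteBelow R y)} ≤ (#B).choose (t + 1) * t := by
  have hcover : {y ∈ Bᶜ | t < #(B.bipartiteBelow R y)} ⊆
      (B.powersetCard (t + 1)).biUnion fun A => {y ∈ Bᶜ | ∀ x ∈ A, R x y} := fun y hy => by
    obtain ⟨hyB, hty⟩ := mem_filter.1 hy
    obtain ⟨A, hA, hAcard⟩ := exists_subset_card_eq (Nat.succ_le_of_lt hty)
    exact mem_biUnion.2 ⟨A, mem_powersetCard.2 ⟨hA.trans (filter_subset _ _), hAcard⟩,
      mem_filter.2 ⟨hyB, fun x hx => (mem_filter.1 (hA hx)).2⟩⟩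
  refine (card_le_card hcover).trans ?_
  rw [← card_powersetCard]
  refine card_biUnion_le_card_mul _ _ _ fun A hA => ?_
  by_contra! hlt
  obtain ⟨hAB, hAcard⟩ := mem_powersetCard.1 hA
  obtain ⟨v, hv⟩ : A.Nonempty := card_pos.1 (by lia)
  obtain ⟨w, -, hw, -⟩ := exists_isZigzag_of_complete (R := R) (j := 2 * t)
    (T := {y ∈ Bᶜ | ∀ x ∈ A, R x y}) (disjoint_compl_right.mono hAB (filter_subset _ _))
    (fun x hx y hy => (mem_filter.1 hy).2 x hx) hv (by lia) (by lia)
  exact hR w hw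

theorem card_exceptional_le (hR : ∀ w, ¬ IsZigzag R (2 * t) w) :
    #(exceptional R q t) ≤ #(hubs R q) + (#(hubs R q)).choose (t + 1) * t :=
  (card_union_le _ _).trans <|
    Nat.add_le_add_left (card_filter_lt_card_bipartiteBelow_le hR _) _

theorem card_filter_exists_pair_le (hF : (F : Set (Finset V)).Sized k) (Q : Finset (V × V)) :
    #{e ∈ F | ∃ p ∈ Q, p.1 ≠ p.2 ∧ p.1 ∈ e ∧ p.2 ∈ e} ≤ #Q * Fintype.card V ^ (k - 2) := by
  have hcover : {e ∈ F | ∃ p ∈ Q, p.1 ≠ p.2 ∧ p.1 ∈ e ∧ p.2 ∈ e} ⊆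
      (Q ×ˢ univ.powersetCard (k - 2)).image fun a => insert a.1.1 (insert a.1.2 a.2) := by
    intro e he
    obtain ⟨he, ⟨x, y⟩, hp, hxy, hx, hy⟩ := mem_filter.1 he
    have hyx : y ∈ e.erase x := mem_erase.2 ⟨hxy.symm, hy⟩
    refine mem_image.2 ⟨((x, y), (e.erase x).erase y), mem_product.2 ⟨hp, ?_⟩, ?_⟩
    · rw [mem_powersetCard_univ, card_erase_of_mem hyx, card_erase_of_mem hx, hF he]
      rfl
    · dsimp only
      rw [insert_erase hyx, insert_erase hx]
  refine (card_le_card hcover).trans <| card_image_le.trans ?_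
  rw [card_product, card_powersetCard]
  exact Nat.mul_le_mul_left _ (Nat.choose_le_pow _ _)

theorem card_filter_exists_center_le (hF : (F : Set (Finset V)).Sized (r + 1)) (S : Finset V) :
    #{e ∈ F | ∃ c ∈ S, c ∈ e ∧ ∀ y ∈ e, y ≠ c → R c y} ≤
      ∑ c ∈ S, (#(univ.bipartiteAbove R c)).choose r := by
  have hcover : {e ∈ F | ∃ c ∈ S, c ∈ e ∧ ∀ y ∈ e, y ≠ c → R c y} ⊆
      S.biUnion fun c => ((univ.bipartiteAbove R c).powersetCard r).image (insert c) := by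
    intro e he
    obtain ⟨he, c, hc, hce, hcy⟩ := mem_filter.1 he
    refine mem_biUnion.2 ⟨c, hc, mem_image.2 ⟨e.erase c, mem_powersetCard.2 ⟨fun y hy => ?_, ?_⟩,
      insert_erase hce⟩⟩
    · exact mem_filter.2 ⟨mem_univ y, hcy y (mem_of_mem_erase hy) (ne_of_mem_erase hy)⟩
    · rw [card_erase_of_mem hce, hF he, Nat.add_sub_cancel]
  refine (card_le_card hcover).trans <| card_biUnion_le.trans <| sum_le_sum fun c _ => ?_
  exact card_image_le.trans (card_powersetCard _ _).le

theorem mul_card_le_of_forall_not_hasCenter_dominators (hr : 2 ≤ r)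
    (hR : ∀ w, ¬ IsZigzag R L w) (hF : (F : Set (Finset V)).Sized (r + 1))
    (hcenter : ∀ e ∈ F, HasCenter R e)
    (hdom : ∀ e ∈ F, ¬ HasCenter (fun x y => x ∈ dominators R q t y) e) :
    q * #F ≤ 2 * L * Fintype.card V ^ r +
      q * (#(hubs R q) * #(exceptional R q t) * Fintype.card V ^ (r - 1)) := by
  set n := Fintype.card V
  have hcover : F ⊆ {e ∈ F | ∃ c ∈ (hubs R q)ᶜ, c ∈ e ∧ ∀ y ∈ e, y ≠ c → R c y} ∪
      {e ∈ F | ∃ p ∈ hubs R q ×ˢ exceptional R q t, p.1 ≠ p.2 ∧ p.1 ∈ e ∧ p.2 ∈ e} := by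
    intro e he
    obtain ⟨c, hc, hcy⟩ := hcenter e he
    by_cases hhub : c ∈ hubs R q
    · have hnot := hdom e he
      simp only [HasCenter, not_exists, not_and, not_forall] at hnot
      obtain ⟨y, hy, hyc, hcdom⟩ := hnot c hc
      have hyZ : y ∈ exceptional R q t := by
        by_contra hyZ
        exact hcdom (by simpa [dominators, hyZ, bipartiteBelow, hhub] using hcy y hy hyc)
      exact mem_union_right _
        (mem_filter.2 ⟨he, (c, y), mem_product.2 ⟨hhub, hyZ⟩, hyc.symm, hc, hy⟩)
    · exact mem_union_left _ (mem_filter.2 ⟨he, c, mem_compl.2 hhub, hc, hcy⟩)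
  calc q * #F
      ≤ q * (∑ c ∈ (hubs R q)ᶜ, (#(univ.bipartiteAbove R c)).choose r +
          #(hubs R q ×ˢ exceptional R q t) * n ^ (r - 1)) :=
        Nat.mul_le_mul_left _ <| (card_le_card hcover).trans <| (card_union_le _ _).trans <|
          Nat.add_le_add (card_filter_exists_center_le hF _) (card_filter_exists_pair_le hF _)
    _ ≤ _ := by
        rw [mul_add, card_product]
        exact Nat.add_le_add_right (mul_sum_compl_hubs_choose_le hr hR) _

end Hubs

/-! ### Stability for families centred by small sets -/

section Stability

theorem sq_mul_choose_le {a b n r : ℕ} (hab : a ≤ b) (hbn : b ≤ n) (hr : 2 ≤ r) :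
    n ^ 2 * a.choose r ≤ a * b * n.choose r := by
  have htwo : n ^ 2 * a.choose 2 ≤ a * b * n.choose 2 := by
    have hab' : (a : ℚ) ≤ b := mod_cast hab
    have hbn' : (b : ℚ) ≤ n := mod_cast hbn
    have hratio : (n : ℚ) * (a - 1) ≤ b * (n - 1) := by nlinarith
    have := mul_le_mul_of_nonneg_left hratio (by positivity : (0 : ℚ) ≤ n * a)
    qify
    rw [Nat.cast_choose_two, Nat.cast_choose_two]
    linarith
  refine Nat.le_of_mul_le_mul_right ?_ (Nat.choose_pos hr)
  calc n ^ 2 * a.choose r * r.choose 2 = n ^ 2 * a.choose 2 * (a - 2).choose (r - 2) := by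
        rw [mul_assoc, Nat.choose_mul hr, mul_assoc]
    _ ≤ a * b * n.choose 2 * (n - 2).choose (r - 2) :=
        Nat.mul_le_mul htwo (Nat.choose_le_choose _ (by lia))
    _ = a * b * n.choose r * r.choose 2 := by
        rw [mul_assoc, ← Nat.choose_mul hr, ← mul_assoc]

variable {V : Type*} [Fintype V] {F : Finset (Finset V)} {N : V → Finset V}
  {t r : ℕ}

theorem card_mul_card_le_of_forall_const {α : Type*} [DecidableEq α] {f : V → α} {s : Finset α}
    {b : ℕ} (hr : 2 ≤ r) (hF : (F : Set (Finset V)).Sized r)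
    (hconst : ∀ e ∈ F, ∃ a ∈ s, ∀ y ∈ e, f y = a) (hb : ∀ a ∈ s, #{y | f y = a} ≤ b)
    (hbV : b ≤ Fintype.card V) :
    Fintype.card V * #F ≤ b * (Fintype.card V).choose r := by
  classical
  set n := Fintype.card V
  obtain hn | hn := n.eq_zero_or_pos
  · simp [hn]
  have hcover : F ⊆ s.biUnion fun a => ({y | f y = a} : Finset V).powersetCard r := by
    intro e he
    obtain ⟨a, ha, hea⟩ := hconst e he
    exact mem_biUnion.2 ⟨a, ha, mem_powersetCard.2
      ⟨fun y hy => mem_filter.2 ⟨mem_univ y, hea y hy⟩, hF he⟩⟩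
  have hfibers : ∑ a ∈ s, #{y | f y = a} ≤ n := by
    rw [sum_card_fiberwise_eq_card_filter]
    exact card_le_univ _
  refine Nat.le_of_mul_le_mul_left ?_ hn
  calc n * (n * #F) ≤ n ^ 2 * ∑ a ∈ s, (#{y | f y = a}).choose r := by
        rw [← mul_assoc, ← sq]
        refine Nat.mul_le_mul_left _ <| (card_le_card hcover).trans <| card_biUnion_le.trans ?_
        simp only [card_powersetCard, le_refl]
    _ ≤ ∑ a ∈ s, #{y | f y = a} * b * n.choose r := by
        rw [mul_sum]
        exact sum_le_sum fun a ha => sq_mul_choose_le (hb a ha) hbV hr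
    _ ≤ n * (b * n.choose r) := by
        simp only [mul_assoc]
        rw [← sum_mul]
        exact Nat.mul_le_mul_right _ hfibers

theorem card_le_sum_card_common [DecidableEq V] (hF : (F : Set (Finset V)).Sized (r + 1))
    (hcenter : ∀ e ∈ F, HasCenter (fun x y => x ∈ N y) e) :
    #F ≤ ∑ f ∈ univ.powersetCard r, #{x | ∀ y ∈ f, x ∈ N y} := by
  have hcover : F ⊆ (univ.powersetCard r).biUnion fun f =>
      ({x | ∀ y ∈ f, x ∈ N y} : Finset V).image fun x => insert x f := by
    intro e he
    obtain ⟨c, hc, hcy⟩ := hcenter e he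
    refine mem_biUnion.2 ⟨e.erase c, ?_, mem_image.2 ⟨c, ?_, insert_erase hc⟩⟩
    · rw [mem_powersetCard_univ, card_erase_of_mem hc, hF he, Nat.add_sub_cancel]
    · exact mem_filter.2
        ⟨mem_univ c, fun y hy => hcy y (mem_of_mem_erase hy) (ne_of_mem_erase hy)⟩
  exact (card_le_card hcover).trans <| card_biUnion_le.trans <| sum_le_sum fun f _ => card_image_le

theorem card_common_lt_or_forall_eq [DecidableEq V] {f : Finset V} (hN : ∀ y, #(N y) ≤ t)
    (hf : f.Nonempty) :
    #{x | ∀ y ∈ f, x ∈ N y} < t ∨ #{x | ∀ y ∈ f, x ∈ N y} = t ∧ ∃ T, #T = t ∧ ∀ y ∈ f, N y = T := by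
  set D : Finset V := {x | ∀ y ∈ f, x ∈ N y}
  have hsub : ∀ y ∈ f, D ⊆ N y := fun y hy x hx => (mem_filter.1 hx).2 y hy
  obtain ⟨y, hy⟩ := hf
  obtain hlt | hD := ((card_le_card (hsub y hy)).trans (hN y)).lt_or_eq
  · exact Or.inl hlt
  · exact Or.inr ⟨hD, D, hD, fun z hz => (eq_of_subset_of_card_le (hsub z hz) (hD ▸ hN z)).symm⟩

theorem exists_card_add_choose_le (hr : 1 ≤ r) (hN : ∀ y, #(N y) ≤ t)
    (hF : (F : Set (Finset V)).Sized (r + 1))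
    (hcenter : ∀ e ∈ F, HasCenter (fun x y => x ∈ N y) e) :
    ∃ C : Finset (Finset V), (C : Set (Finset V)).Sized r ∧
      (∀ f ∈ C, ∃ T, #T = t ∧ ∀ y ∈ f, N y = T) ∧
      #F + (Fintype.card V).choose r ≤ t * (Fintype.card V).choose r + #C := by
  classical
  refine ⟨{f ∈ (univ : Finset V).powersetCard r | ∃ T, #T = t ∧ ∀ y ∈ f, N y = T},
    (Set.sized_powersetCard univ r).mono (coe_subset.2 (filter_subset _ _)),
    fun f hf => (mem_filter.1 hf).2, ?_⟩
  calc #F + (Fintype.card V).choose r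
      ≤ ∑ f ∈ univ.powersetCard r, (#{x | ∀ y ∈ f, x ∈ N y} + 1) := by
        rw [sum_add_distrib, sum_const, card_powersetCard, card_univ, smul_eq_mul, mul_one]
        exact Nat.add_le_add_right (card_le_sum_card_common hF hcenter) _
    _ ≤ ∑ f ∈ univ.powersetCard r,
          (t + if ∃ T, #T = t ∧ ∀ y ∈ f, N y = T then 1 else 0) := by
        refine sum_le_sum fun f hf => ?_
        have hne : f.Nonempty := card_pos.1 (by rwa [(mem_powersetCard.1 hf).2])
        obtain hlt | ⟨heq, hconst⟩ := card_common_lt_or_forall_eq hN hne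
        · exact (Nat.succ_le_of_lt hlt).trans (Nat.le_add_right _ _)
        · rw [heq, if_pos hconst]
    _ = _ := by
        rw [sum_add_distrib, sum_const, card_powersetCard, card_univ, smul_eq_mul, mul_comm,
          card_filter]

theorem exists_card_mul_card_add_le [DecidableEq V] (hr : 2 ≤ r) (ht : t ≤ Fintype.card V)
    (hN : ∀ y, #(N y) ≤ t) (hF : (F : Set (Finset V)).Sized (r + 1))
    (hcenter : ∀ e ∈ F, HasCenter (fun x y => x ∈ N y) e) :
    ∃ T, #T = t ∧ Fintype.card V * #F + #{y | N y ≠ T} * (Fintype.card V).choose r ≤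
      Fintype.card V * t * (Fintype.card V).choose r := by
  obtain ⟨T, hT, hmax⟩ := exists_max_image (univ.powersetCard t) (fun T => #{y | N y = T})
    (powersetCard_nonempty.2 (by rwa [card_univ]))
  refine ⟨T, mem_powersetCard_univ.1 hT, ?_⟩
  obtain ⟨C, hC, hconst, hcard⟩ := exists_card_add_choose_le (by lia) hN hF hcenter
  have hCle := card_mul_card_le_of_forall_const hr hC
    (by simpa only [mem_powersetCard_univ] using hconst) hmax (card_le_univ _)
  have hsplit : #{y | N y = T} + #{y | N y ≠ T} = Fintype.card V :=
    card_filter_add_card_filter_not _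
  have := Nat.mul_le_mul_left (Fintype.card V) hcard
  rw [mul_add, mul_add, ← mul_assoc] at this
  nth_rw 2 [← hsplit] at this
  linarith

theorem card_filter_disjoint_le [DecidableEq V] {T : Finset V} (hr : 1 ≤ r)
    (hN : ∀ y, #(N y) ≤ t) (hF : (F : Set (Finset V)).Sized (r + 1))
    (hcenter : ∀ e ∈ F, HasCenter (fun x y => x ∈ N y) e) :
    #{e ∈ F | e ∩ T = ∅} ≤ #{y | N y ≠ T} * t * Fintype.card V ^ (r - 1) := by
  set Q : Finset (V × V) := ({y | N y ≠ T} : Finset V).biUnion fun y => N y ×ˢ {y}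
  have hQ : #Q ≤ #{y | N y ≠ T} * t :=
    card_biUnion_le_card_mul _ _ _ fun y _ => by simpa using hN y
  have hcover : {e ∈ F | e ∩ T = ∅} ⊆ {e ∈ F | ∃ p ∈ Q, p.1 ≠ p.2 ∧ p.1 ∈ e ∧ p.2 ∈ e} := by
    intro e he
    obtain ⟨he, hdisj⟩ := mem_filter.1 he
    obtain ⟨c, hc, hcy⟩ := hcenter e he
    obtain ⟨y, hy, hyc⟩ := exists_mem_ne (by rw [hF he]; lia : 1 < #e) c
    have hcN := hcy y hy hyc
    have hyT : N y ≠ T := by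
      rintro rfl
      exact notMem_empty c (hdisj ▸ mem_inter.2 ⟨hc, hcN⟩)
    refine mem_filter.2 ⟨he, (c, y), ?_, hyc.symm, hc, hy⟩
    exact mem_biUnion.2 ⟨y, mem_filter.2 ⟨mem_univ y, hyT⟩,
      mem_product.2 ⟨hcN, mem_singleton_self y⟩⟩
  exact (card_le_card hcover).trans <| (card_filter_exists_pair_le hF Q).trans <|
    Nat.mul_le_mul_right _ hQ

end Stability

/-! ### Asymptotics -/

section Asymptotic

open Filter

variable {k t r : ℕ}

theorem exists_mul_card_le_of_forall_not_isLinearPath (hk : 4 ≤ k) (ht : 1 ≤ t) (q : ℕ) :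
    ∃ K : ℕ, ∀ (V : Type*) [Fintype V] [DecidableEq V] (F : Finset (Finset V)),
      (F : Set (Finset V)).Sized k → (∀ P, ¬ IsLinearPath F (2 * t + 2) P) →
      ∃ N : V → Finset V, (∀ y, #(N y) ≤ t) ∧
        ∀ H ⊆ F, (∀ e ∈ H, ¬ HasCenter (fun x y => x ∈ N y) e) →
          q * #H ≤ 4 * t * Fintype.card V ^ (k - 1) + K * Fintype.card V ^ (k - 2) := by
  set m := 2 * t + 1 + (2 * t + 2) * k
  set c := k ^ k * (2 ^ k * (m + 1)) ^ 2 ^ k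
  set M := 2 * (2 * t) * q
  refine ⟨q * c + q * (M * (M + M.choose (t + 1) * t)), fun V _ _ F hF hpath => ?_⟩
  classical
  have hzigzag : ∀ w, ¬ IsZigzag (KernelArc m F) (2 * t) w := fun w hw =>
    (hw.exists_isLinearPath hF ht le_rfl).elim hpath
  have hhubs : #(hubs (KernelArc m F) q) ≤ M := card_hubs_le hzigzag
  have hexc : #(exceptional (KernelArc m F) q t) ≤ M + M.choose (t + 1) * t :=
    (card_exceptional_le hzigzag).trans <|
      Nat.add_le_add hhubs (Nat.mul_le_mul_right _ (Nat.choose_le_choose _ hhubs))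
  refine ⟨dominators (KernelArc m F) q t, card_dominators_le, fun H hHF hH => ?_⟩
  have hcentered := mul_card_le_of_forall_not_hasCenter_dominators (r := k - 1) (by lia) hzigzag
    (F := {e ∈ H | HasCenter (KernelArc m F) e})
    (fun e he => (hF (hHF (mem_filter.1 he).1)).trans (by lia))
    (fun e he => (mem_filter.1 he).2) fun e he => hH e (mem_filter.1 he).1
  rw [Nat.sub_sub] at hcentered
  have hfree : #{e ∈ H | ¬ HasCenter (KernelArc m F) e} ≤ c * Fintype.card V ^ (k - 2) := by
    have hsub : {e ∈ H | ¬ HasCenter (KernelArc m F) e} ⊆ F := (filter_subset _ _).trans hHF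
    refine (card_le_mul_choose_of_forall_not_hasCenter (hF.mono (coe_subset.2 hsub)) hk
      ((Nat.mul_le_mul_right k (by lia)).trans (Nat.le_add_left ((2 * t + 2) * k) _))
      (Nat.le_add_left _ _) (fun P hP => hpath P (hP.mono hsub))
      fun e he h => (mem_filter.1 he).2 (h.imp fun _ _ => KernelArc.mono hsub)).trans ?_
    exact Nat.mul_le_mul_left _ (Nat.choose_le_pow _ _)
  calc q * #H
      = q * #{e ∈ H | HasCenter (KernelArc m F) e} +
          q * #{e ∈ H | ¬ HasCenter (KernelArc m F) e} := by
        rw [← mul_add, card_filter_add_card_filter_not]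
    _ ≤ 2 * (2 * t) * Fintype.card V ^ (k - 1) +
          q * (M * (M + M.choose (t + 1) * t) * Fintype.card V ^ (k - 2)) +
          q * (c * Fintype.card V ^ (k - 2)) :=
        Nat.add_le_add (hcentered.trans (by gcongr)) (Nat.mul_le_mul_left _ hfree)
    _ = _ := by ring

theorem exists_eventually_pow_le_mul_choose (r : ℕ) :
    ∃ c : ℝ, 0 < c ∧ ∀ᶠ n : ℕ in atTop, (n : ℝ) ^ r ≤ c * n.choose r := by
  obtain ⟨c, hc, hle⟩ := (isTheta_choose r).isBigO_symm.exists_pos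
  refine ⟨c, hc, hle.bound.mono fun n hn => ?_⟩
  simpa using hn

theorem eventually_mul_pow_le_mul_choose {s : ℕ} (hsr : s < r) (K : ℝ) {β : ℝ} (hβ : 0 < β) :
    ∀ᶠ n : ℕ in atTop, K * (n : ℝ) ^ s ≤ β * n.choose r := by
  have hpow : (fun n : ℕ => (n : ℝ) ^ s) =o[atTop] fun n : ℕ => (n : ℝ) ^ r :=
    (Asymptotics.isLittleO_pow_pow_atTop_of_lt hsr).comp_tendsto tendsto_natCast_atTop_atTop
  have := ((hpow.trans_isTheta (isTheta_choose r).symm).const_mul_left K).bound hβ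
  filter_upwards [this] with n hn
  exact (le_abs_self _).trans (by simpa using hn)

theorem eventually_exists_card_le_of_forall_not_isLinearPath (hk : 4 ≤ k) (ht : 1 ≤ t) {β : ℝ}
    (hβ : 0 < β) :
    ∀ᶠ n : ℕ in atTop, ∀ F : Finset (Finset (Fin n)), (F : Set (Finset (Fin n))).Sized k →
      (∀ P, ¬ IsLinearPath F (2 * t + 2) P) →
      ∃ N : Fin n → Finset (Fin n), (∀ y, #(N y) ≤ t) ∧
        ∀ H ⊆ F, (∀ e ∈ H, ¬ HasCenter (fun x y => x ∈ N y) e) →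
          (#H : ℝ) ≤ β * n.choose (k - 1) := by
  obtain ⟨c, hc, hpow⟩ := exists_eventually_pow_le_mul_choose (k - 1)
  obtain ⟨q, hq⟩ := exists_nat_gt (8 * t * c / β)
  have hqβ : 4 * t * c ≤ q * β / 2 := by linarith [(div_lt_iff₀ hβ).1 hq]
  have hq0 : (0 : ℝ) < q := lt_of_le_of_lt (by positivity) hq
  obtain ⟨K, hK⟩ := exists_mul_card_le_of_forall_not_isLinearPath hk ht q
  filter_upwards [hpow, eventually_mul_pow_le_mul_choose (by lia : k - 2 < k - 1) K
    (by positivity : 0 < q * β / 2)] with n hpow hlow F hF hpath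
  obtain ⟨N, hN, hsparse⟩ := hK (Fin n) F hF hpath
  refine ⟨N, hN, fun H hHF hH => le_of_mul_le_mul_left ?_ hq0⟩
  have hcard : (q : ℝ) * #H ≤ 4 * t * (n : ℝ) ^ (k - 1) + K * (n : ℝ) ^ (k - 2) := by
    have := hsparse H hHF hH
    rw [Fintype.card_fin] at this
    exact_mod_cast this
  calc (q : ℝ) * #H ≤ 4 * t * (n : ℝ) ^ (k - 1) + K * (n : ℝ) ^ (k - 2) := hcard
    _ ≤ 4 * t * (c * n.choose (k - 1)) + q * β / 2 * n.choose (k - 1) := by gcongr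
    _ = 4 * t * c * n.choose (k - 1) + q * β / 2 * n.choose (k - 1) := by ring
    _ ≤ q * β / 2 * n.choose (k - 1) + q * β / 2 * n.choose (k - 1) := by
      gcongr
    _ = q * (β * n.choose (k - 1)) := by ring

variable {V : Type*} [Fintype V] [DecidableEq V] {F : Finset (Finset V)}

theorem exists_card_filter_disjoint_le_of_forall_hasCenter {N : V → Finset V} {β c : ℝ}
    (hr : 2 ≤ r) (ht : t ≤ Fintype.card V) (hV : r ≤ Fintype.card V) (hβ : 0 ≤ β)
    (hpow : (Fintype.card V : ℝ) ^ r ≤ c * (Fintype.card V).choose r)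
    (hN : ∀ y, #(N y) ≤ t) (hF : (F : Set (Finset V)).Sized (r + 1))
    (hcenter : ∀ e ∈ F, HasCenter (fun x y => x ∈ N y) e)
    (hcard : (t - β) * (Fintype.card V).choose r ≤ #F) :
    ∃ T, #T = t ∧ (#{e ∈ F | e ∩ T = ∅} : ℝ) ≤ β * t * c * (Fintype.card V).choose r := by
  set n := Fintype.card V
  obtain ⟨T, hT, hle⟩ := exists_card_mul_card_add_le hr ht hN hF hcenter
  set h := #{y | N y ≠ T}
  have hmiss : #{e ∈ F | e ∩ T = ∅} ≤ h * t * n ^ (r - 1) :=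
    card_filter_disjoint_le (by lia) hN hF hcenter
  have hchoose : (0 : ℝ) < n.choose r := mod_cast Nat.choose_pos hV
  have hh : (h : ℝ) ≤ β * n := by
    refine le_of_mul_le_mul_right ?_ hchoose
    have hle' : (n : ℝ) * #F + h * n.choose r ≤ n * t * n.choose r := mod_cast hle
    linarith [mul_le_mul_of_nonneg_left hcard n.cast_nonneg]
  refine ⟨T, hT, ?_⟩
  calc (#{e ∈ F | e ∩ T = ∅} : ℝ) ≤ h * t * (n : ℝ) ^ (r - 1) := mod_cast hmiss
    _ ≤ β * n * t * (n : ℝ) ^ (r - 1) := by gcongr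
    _ = β * t * (n * (n : ℝ) ^ (r - 1)) := by ring
    _ = β * t * (n : ℝ) ^ r := by rw [mul_pow_sub_one (by lia)]
    _ ≤ β * t * (c * n.choose r) := by gcongr
    _ = β * t * c * n.choose r := by ring

theorem exists_card_filter_disjoint_le {N : V → Finset V} {β c : ℝ} (hr : 2 ≤ r)
    (ht : t ≤ Fintype.card V) (hV : r ≤ Fintype.card V) (hβ : 0 ≤ β)
    (hpow : (Fintype.card V : ℝ) ^ r ≤ c * (Fintype.card V).choose r)
    (hN : ∀ y, #(N y) ≤ t) (hF : (F : Set (Finset V)).Sized (r + 1))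
    (hsparse : ∀ H ⊆ F, (∀ e ∈ H, ¬ HasCenter (fun x y => x ∈ N y) e) →
      (#H : ℝ) ≤ β * (Fintype.card V).choose r)
    (hcard : (t - β) * (Fintype.card V).choose r ≤ #F) :
    ∃ T, #T = t ∧
      (#{e ∈ F | e ∩ T = ∅} : ℝ) ≤ β * (1 + 2 * t * c) * (Fintype.card V).choose r := by
  classical
  set G := {e ∈ F | HasCenter (fun x y => x ∈ N y) e}
  set H := {e ∈ F | ¬ HasCenter (fun x y => x ∈ N y) e}
  have hH : (#H : ℝ) ≤ β * (Fintype.card V).choose r :=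
    hsparse H (filter_subset _ _) fun e he => (mem_filter.1 he).2
  have hsplit : (#G : ℝ) + #H = #F := mod_cast card_filter_add_card_filter_not _
  obtain ⟨T, hT, hG⟩ := exists_card_filter_disjoint_le_of_forall_hasCenter (F := G) hr ht hV
    (by positivity : 0 ≤ 2 * β) hpow hN (hF.mono (coe_subset.2 (filter_subset _ _)))
    (fun e he => (mem_filter.1 he).2) (by linarith)
  have hunion : (#{e ∈ F | e ∩ T = ∅} : ℝ) ≤ #{e ∈ G | e ∩ T = ∅} + #H :=
    mod_cast (card_le_card fun e he => by grind).trans (card_union_le _ _)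
  exact ⟨T, hT, by linarith⟩

end Asymptotic

/-- Theorem 5.3 (stability): for k ≥ 4, t ≥ 1 and ε > 0 there are δ > 0 and n₀ such that
for n ≥ n₀, every family of k-sets on [n] with no linear path of length 2t+2 and at least
(t-δ)·C(n,k-1) members has a t-set S such that at most ε·C(n,k-1) members miss S. -/
theorem turan_linear_path_stability (k t : ℕ) (hk : 4 ≤ k) (ht : 1 ≤ t)
    (ε : ℝ) (hε : 0 < ε) :
    ∃ δ : ℝ, 0 < δ ∧ ∃ n₀ : ℕ, ∀ n : ℕ, n₀ ≤ n →
      ∀ F : Finset (Finset (Fin n)), (∀ A ∈ F, A.card = k) →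
        ¬ ContainsLinearPath k (2 * t + 2) F →
        (t - δ) * (n.choose (k - 1)) ≤ (F.card : ℝ) →
        ∃ S : Finset (Fin n), S.card = t ∧
          ((F.filter (fun A => A ∩ S = ∅)).card : ℝ) ≤ ε * (n.choose (k - 1)) := by
  obtain ⟨r, rfl⟩ := Nat.exists_eq_add_of_le' (by lia : 1 ≤ k)
  rw [Nat.add_sub_cancel]
  obtain ⟨c, hc, hpow⟩ := exists_eventually_pow_le_mul_choose r
  have hε' : 0 < ε / (1 + 2 * t * c) := by positivity
  obtain ⟨n₀, hn₀⟩ := Filter.eventually_atTop.1 <|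
    (eventually_exists_card_le_of_forall_not_isLinearPath hk ht hε').and hpow
  refine ⟨_, hε', max n₀ (max t r), fun n hn F hF hpath hcard => ?_⟩
  obtain ⟨hn, htn, hrn⟩ : n₀ ≤ n ∧ t ≤ n ∧ r ≤ n := by simpa using hn
  obtain ⟨hsparse, hpow⟩ := hn₀ n hn
  obtain ⟨N, hN, hsparse⟩ := hsparse F hF fun P hP =>
    hpath (hP.containsLinearPath (by lia) hF)
  obtain ⟨S, hS, hle⟩ := exists_card_filter_disjoint_le (V := Fin n) (t := t) (c := c)
    (by lia) (by simpa) (by simpa) hε'.le (by simpa) hN hF (by simpa using hsparse) (by simpa)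
  refine ⟨S, hS, hle.trans_eq ?_⟩
  rw [div_mul_cancel₀ ε (by positivity), Fintype.card_fin]
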